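/- Let k ≥ 1 and e ≥ 0 be integers. In the tensor product R(k,2^e) ⊗ R(k,2^e) over ZMod 2, the element (z_1·z_2·…·z_k)^{2^{e+1}−1} is nonzero, where z_i = x_i ⊗ 1 + 1 ⊗ x_i. -/

import Mathlib

/-!
Index the variables from `0` and put `N_j = m + k - 1 - j`, so that the relations of `R(k, m)` read
`h_{N_j + 1}(x_0, …, x_j) = 0` for `j < k`.

Each relation is a monic equation of degree `N_j + 1` for `x_j` over the ring generated by the
earlier variables. Adjoining the variables one at a time thus gives a tower of free extensions, in
which the top monomial `M = ∏ x_j ^ N_j` is nonzero. Moreover `∏_{i < j} x_i ^ N_i` annihilates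
`x_0, …, x_{j-1}`, so that multiplied by it the relation for `x_j` collapses to `x_j ^ (N_j + 1)`.

Let `u = x_j ⊗ 1`, `v = 1 ⊗ x_j`, `N = N_j` and let `q ≤ N` be a power of two. In characteristic two
`(u + v) ^ (2q - 1) = (u ^ q + v ^ q) * (u + v) ^ (q - 1)`, and multiplying this by
`u ^ (N - q + 1) * v ^ (N - q)` leaves only `u ^ N * v ^ N` modulo `u ^ (N + 1)` and `v ^ (N + 1)`.
Taking one variable after the other, the product of the `(x_j ⊗ 1 + 1 ⊗ x_j) ^ (2 q_j - 1)` divides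
`M ⊗ M`, which is nonzero because the tensor product is over a field.
-/

open scoped TensorProduct

/-- Complete homogeneous symmetric polynomial of degree `d` in a list of elements
of a commutative (semi)ring: `h_d(l)`. -/
noncomputable def completeHomog {R : Type*} [CommSemiring R] : List R → ℕ → R
  | [], 0 => 1
  | [], _ + 1 => 0
  | x :: l, d => ∑ t ∈ Finset.range (d + 1), x ^ t * completeHomog l (d - t)

/-- Elementary symmetric polynomial of degree `d` in a list of elements: `e_d(l)`. -/
noncomputable def elemSymm {R : Type*} [CommSemiring R] : List R → ℕ → R
  | _, 0 => 1
  | [], _ + 1 => 0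
  | x :: l, d + 1 => elemSymm l (d + 1) + x * elemSymm l d

/-- The ideal of `(ZMod 2)[x_1, …, x_k]` generated by the complete homogeneous
symmetric polynomials `h_{m+i}(x_1, …, x_{k+1-i})` for `1 ≤ i ≤ k`. -/
noncomputable def flagIdeal (k m : ℕ) : Ideal (MvPolynomial (Fin k) (ZMod 2)) :=
  Ideal.span { p | ∃ i : ℕ, 1 ≤ i ∧ i ≤ k ∧
    p = completeHomog (((List.finRange k).take (k + 1 - i)).map MvPolynomial.X) (m + i) }

/-- `R(k,m)`, the quotient of `(ZMod 2)[x_1, …, x_k]` by `flagIdeal k m`;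
this is the mod-2 cohomology ring of the real flag manifold `F(1^k, m)`. -/
abbrev FlagRing (k m : ℕ) : Type :=
  MvPolynomial (Fin k) (ZMod 2) ⧸ flagIdeal k m

/-- The image of the variable `x_{j+1}` in `R(k,m)` (`j` is 0-indexed). -/
noncomputable def xGen (k m : ℕ) (j : Fin k) : FlagRing k m :=
  Ideal.Quotient.mk (flagIdeal k m) (MvPolynomial.X j)

/-- The zero-divisor `z_{j+1} = x_{j+1} ⊗ 1 + 1 ⊗ x_{j+1}` in `R(k,m) ⊗ R(k,m)`. -/
noncomputable def zGen (k m : ℕ) (j : Fin k) :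
    FlagRing k m ⊗[ZMod 2] FlagRing k m :=
  xGen k m j ⊗ₜ 1 + 1 ⊗ₜ xGen k m j

/-- `x_{i+1,j+1}` in the `s`-fold tensor power `R(k,m)^{⊗ s}`: the element having
`x_{j+1}` in the `(i+1)`-st tensor factor and `1` elsewhere (`i`, `j` 0-indexed). -/
noncomputable def xT (k m s : ℕ) (i : Fin s) (j : Fin k) :
    ⨂[ZMod 2] _ : Fin s, FlagRing k m :=
  PiTensorProduct.tprod (ZMod 2) (fun t => if t = i then xGen k m j else 1)

/-- The `s`-th zero-divisor `z_{i+1,j+1} = x_{1,j+1} + x_{i+1,j+1}` in `R(k,m)^{⊗ s}`. -/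
noncomputable def zT (k m s : ℕ) (hs : 0 < s) (i : Fin s) (j : Fin k) :
    ⨂[ZMod 2] _ : Fin s, FlagRing k m :=
  xT k m s ⟨0, hs⟩ j + xT k m s i j

universe u

section CompleteHomog

variable {R : Type*} [CommSemiring R]

lemma completeHomog_zero (l : List R) : completeHomog l 0 = 1 := by
  induction l with
  | nil => rfl
  | cons x l ih => simp [completeHomog, ih]

lemma completeHomog_cons_succ (x : R) (l : List R) (d : ℕ) :
    completeHomog (x :: l) (d + 1) = completeHomog l (d + 1) + x * completeHomog (x :: l) d := by
  rw [completeHomog, completeHomog, Finset.sum_range_succ', Finset.mul_sum, add_comm]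
  simp [pow_succ', mul_assoc]

lemma completeHomog_concat_succ (l : List R) (x : R) (d : ℕ) :
    completeHomog (l ++ [x]) (d + 1) =
      x * completeHomog (l ++ [x]) d + completeHomog l (d + 1) := by
  induction l generalizing d with
  | nil => rw [List.nil_append, completeHomog_cons_succ, add_comm]
  | cons y l ihl =>
    rw [List.cons_append]
    induction d with
    | zero => simp only [completeHomog_cons_succ, completeHomog_zero, ihl]; ring
    | succ d ihd =>
      calc completeHomog (y :: (l ++ [x])) (d + 2)
        _ = completeHomog (l ++ [x]) (d + 2) + y * completeHomog (y :: (l ++ [x])) (d + 1) :=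
          completeHomog_cons_succ ..
        _ = x * (completeHomog (l ++ [x]) (d + 1) + y * completeHomog (y :: (l ++ [x])) d) +
            (completeHomog l (d + 2) + y * completeHomog (y :: l) (d + 1)) := by
          rw [ihl, ihd]; ring
        _ = x * completeHomog (y :: (l ++ [x])) (d + 1) + completeHomog (y :: l) (d + 2) := by
          rw [← completeHomog_cons_succ, ← completeHomog_cons_succ]

lemma map_completeHomog {S : Type*} [CommSemiring S] (f : R →+* S) (l : List R) (d : ℕ) :
    f (completeHomog l d) = completeHomog (l.map f) d := by
  induction l generalizing d with
  | nil => cases d <;> simp [completeHomog]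
  | cons x l ih => simp [completeHomog, ih]

lemma mul_completeHomog_succ_eq_zero {P : R} {l : List R} (h : ∀ y ∈ l, P * y = 0) (d : ℕ) :
    P * completeHomog l (d + 1) = 0 := by
  induction l with
  | nil => simp [completeHomog]
  | cons y l ih =>
    obtain ⟨hy, hl⟩ := List.forall_mem_cons.1 h
    rw [completeHomog_cons_succ, mul_add, ih hl, ← mul_assoc, hy, zero_mul, add_zero]

lemma mul_completeHomog_concat {P : R} {l : List R} (h : ∀ y ∈ l, P * y = 0) (x : R) (d : ℕ) :
    P * completeHomog (l ++ [x]) d = P * x ^ d := by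
  induction d with
  | zero => rw [completeHomog_zero, pow_zero]
  | succ d ih =>
    rw [completeHomog_concat_succ, mul_add, mul_completeHomog_succ_eq_zero h, add_zero,
      mul_left_comm, ih, mul_left_comm, pow_succ']

open Polynomial in
lemma isMonicOfDegree_completeHomog_concat_X [Nontrivial R] (l : List R) (d : ℕ) :
    IsMonicOfDegree (completeHomog (l.map C ++ [(X)]) d) d := by
  induction d with
  | zero => rw [completeHomog_zero, isMonicOfDegree_zero_iff]
  | succ d ih =>
    rw [completeHomog_concat_succ, ← map_completeHomog, add_comm d 1]
    exact ((isMonicOfDegree_X R).mul ih).add_right (by rw [natDegree_C]; omega)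

end CompleteHomog

open Polynomial in
lemma completeHomog_concat_root {R : Type*} [CommRing R] (l : List R) (d : ℕ) :
    let p : R[X] := completeHomog (l.map C ++ [(X)]) d
    completeHomog (l.map (AdjoinRoot.of p) ++ [AdjoinRoot.root p]) d = 0 := by
  intro p
  have hp : AdjoinRoot.mk p (completeHomog (l.map C ++ [(X)]) d) = 0 := AdjoinRoot.mk_self
  rw [map_completeHomog] at hp
  simpa [Function.comp_def] using hp

/-- The relations `h_{N_j + 1}(x_0, …, x_j) = 0` for `j < k`. For `N_j = m + k - 1 - j` these are
the defining relations of `R(k, m)`, indexed by their last variable `x_j` instead of by `i = k - j`.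
The degrees are written `N_j + 1` so that `N_j` is the exponent of `x_j` in the top monomial. -/
def FlagRelations {R : Type*} [CommSemiring R] (N : ℕ → ℕ) (k : ℕ) (x : ℕ → R) : Prop :=
  ∀ j < k, completeHomog ((List.range j).map x ++ [x j]) (N j + 1) = 0

namespace FlagRelations

section CommSemiring

variable {R : Type*} [CommSemiring R] {N : ℕ → ℕ} {k : ℕ} {x : ℕ → R}

lemma mono (h : FlagRelations N k x) {j : ℕ} (hj : j ≤ k) : FlagRelations N j x :=
  fun i hi => h i (hi.trans_le hj)

lemma map {S : Type*} [CommSemiring S] (h : FlagRelations N k x) (f : R →+* S) :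
    FlagRelations N k (f ∘ x) := fun j hj => by
  simpa [map_completeHomog] using congrArg f (h j hj)

lemma update (h : FlagRelations N k x) {a : R}
    (ha : completeHomog ((List.range k).map x ++ [a]) (N k + 1) = 0) :
    FlagRelations N (k + 1) (Function.update x k a) := by
  intro j hj
  have hprefix : (List.range j).map (Function.update x k a) = (List.range j).map x :=
    List.map_congr_left fun i hi =>
      Function.update_of_ne (by have := List.mem_range.1 hi; omega) ..
  rw [hprefix]
  obtain hjk | rfl := Nat.lt_succ_iff_lt_or_eq.1 hj
  · rw [Function.update_of_ne hjk.ne, h j hjk]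
  · rw [Function.update_self, ha]

lemma prod_pow_mul_eq_zero (h : FlagRelations N k x) :
    ∀ i < k, (∏ j ∈ Finset.range k, x j ^ N j) * x i = 0 := by
  induction k with
  | zero => simp
  | succ k ih =>
    have hkill := ih (h.mono k.le_succ)
    intro i hi
    rw [Finset.prod_range_succ]
    obtain hik | rfl := Nat.lt_succ_iff_lt_or_eq.1 hi
    · rw [mul_right_comm, hkill i hik, zero_mul]
    · rw [mul_assoc, ← pow_succ,
        ← mul_completeHomog_concat (l := (List.range i).map x) (by simpa using hkill),
        h i i.lt_succ_self, mul_zero]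

lemma prod_pow_mul_pow_succ_eq_zero (h : FlagRelations N k x) {j : ℕ} (hj : j < k) :
    (∏ i ∈ Finset.range j, x i ^ N i) * x j ^ (N j + 1) = 0 := by
  rw [pow_succ, ← mul_assoc, ← Finset.prod_range_succ]
  exact (h.mono hj).prod_pow_mul_eq_zero j j.lt_succ_self

end CommSemiring

open Polynomial in
lemma exists_algebra_succ {R : Type u} [CommRing R] {N : ℕ → ℕ} {k : ℕ} {x : ℕ → R}
    (h : FlagRelations N k x) (htop : ∏ j ∈ Finset.range k, x j ^ N j ≠ 0) :
    ∃ (S : Type u) (_ : CommRing S) (_ : Algebra R S) (y : ℕ → S),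
      FlagRelations N (k + 1) y ∧ ∏ j ∈ Finset.range (k + 1), y j ^ N j ≠ 0 := by
  have : Nontrivial R := nontrivial_of_ne _ _ htop
  let p : R[X] := completeHomog (((List.range k).map x).map C ++ [(X)]) (N k + 1)
  have hp : IsMonicOfDegree p (N k + 1) := isMonicOfDegree_completeHomog_concat_X _ _
  let y : ℕ → AdjoinRoot p := Function.update (AdjoinRoot.of p ∘ x) k (AdjoinRoot.root p)
  have hy : FlagRelations N (k + 1) y :=
    (h.map (AdjoinRoot.of p)).update (by rw [← List.map_map]; exact completeHomog_concat_root _ _)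
  have hprod : ∏ j ∈ Finset.range (k + 1), y j ^ N j =
      AdjoinRoot.mk p (monomial (N k) (∏ j ∈ Finset.range k, x j ^ N j)) := by
    have hy_of : ∀ j ∈ Finset.range k, y j ^ N j = AdjoinRoot.of p (x j ^ N j) := fun j hj => by
      simp [y, (Finset.mem_range.1 hj).ne]
    rw [Finset.prod_range_succ, Finset.prod_congr rfl hy_of, ← map_prod,
      ← C_mul_X_pow_eq_monomial, map_mul, map_pow, AdjoinRoot.mk_X, AdjoinRoot.mk_C]
    simp [y]
  refine ⟨AdjoinRoot p, inferInstance, inferInstance, y, hy, hprod ▸ ?_⟩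
  refine AdjoinRoot.mk_ne_zero_of_natDegree_lt hp.monic ((monomial_eq_zero_iff _ _).not.2 htop) ?_
  exact (natDegree_monomial_le _).trans_lt (hp.natDegree_eq ▸ Nat.lt_succ_self _)

theorem exists_algebra_prod_pow_ne_zero (A : Type u) [CommRing A] [Nontrivial A] (N : ℕ → ℕ)
    (k : ℕ) :
    ∃ (S : Type u) (_ : CommRing S) (_ : Algebra A S) (x : ℕ → S),
      FlagRelations N k x ∧ ∏ j ∈ Finset.range k, x j ^ N j ≠ 0 := by
  induction k with
  | zero => exact ⟨A, inferInstance, inferInstance, 0, by simp [FlagRelations], by simp⟩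
  | succ k ih =>
    obtain ⟨R, _, _, x, hx, htop⟩ := ih
    obtain ⟨S, _, _, y, hy, htop'⟩ := hx.exists_algebra_succ htop
    exact ⟨S, inferInstance, Algebra.compHom S (algebraMap A R), y, hy, htop'⟩

lemma exists_algHom_xGen {S : Type*} [CommRing S] [Algebra (ZMod 2) S] {k m : ℕ} {x : ℕ → S}
    (h : FlagRelations (fun j => m + k - 1 - j) k x) :
    ∃ φ : FlagRing k m →ₐ[ZMod 2] S, ∀ j, φ (xGen k m j) = x j := by
  let f : MvPolynomial (Fin k) (ZMod 2) →ₐ[ZMod 2] S := MvPolynomial.aeval fun j => x j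
  have hf_take (j : ℕ) (hj : j < k) :
      (((List.finRange k).take (j + 1)).map (MvPolynomial.X (R := ZMod 2))).map (f : _ →+* S) =
        (List.range j).map x ++ [x j] := by
    rw [← List.map_singleton, ← List.map_append, ← List.range_succ]
    refine List.ext_getElem (by simpa using hj) fun i _ hi => ?_
    simp [f]
  have hle : flagIdeal k m ≤ RingHom.ker (f : _ →+* S) := by
    refine Ideal.span_le.2 ?_
    rintro _ ⟨i, hi, hik, rfl⟩
    rw [SetLike.mem_coe, RingHom.mem_ker, map_completeHomog,
      show k + 1 - i = k - i + 1 by omega, hf_take (k - i) (by omega), ← h (k - i) (by omega)]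
    congr 1
    grind
  refine ⟨Ideal.Quotient.liftₐ _ f hle, fun j => ?_⟩
  change f (MvPolynomial.X j) = x j
  exact MvPolynomial.aeval_X ..

end FlagRelations

section TensorSquare

lemma mul_add_pow_of_mul_eq_zero {R : Type*} [CommSemiring R] {Q v : R} (h : Q * v = 0) (u : R)
    (n : ℕ) : Q * (u + v) ^ n = Q * u ^ n := by
  induction n with
  | zero => simp
  | succ n ih =>
    rw [pow_succ, ← mul_assoc, ih, mul_add, mul_right_comm Q _ v, h, zero_mul, add_zero, mul_assoc,
      pow_succ]

variable (p : ℕ)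

lemma mul_add_pow_dvd {R : Type*} [CommRing R] [ExpChar R p] {Q u v : R} {N e : ℕ}
    (he : p ^ e ≤ N) (hu : Q * u ^ (N + 1) = 0) (hv : Q * v ^ (N + 1) = 0) :
    Q * (u + v) ^ (2 * p ^ e - 1) ∣ Q * (u ^ N * v ^ N) := by
  obtain ⟨b, rfl⟩ := Nat.exists_eq_add_of_le he
  obtain ⟨a, ha⟩ : ∃ a, p ^ e = a + 1 := Nat.exists_eq_add_one.2 (expChar_pow_pos R p e)
  have hfrob : (u + v) ^ (2 * p ^ e - 1) = (u ^ p ^ e + v ^ p ^ e) * (u + v) ^ a := by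
    rw [← add_pow_expChar_pow, ← pow_add]
    congr 1
    omega
  have hcollapse : Q * v ^ (p ^ e + b) * (u + v) ^ a = Q * v ^ (p ^ e + b) * u ^ a :=
    mul_add_pow_of_mul_eq_zero (by rw [mul_assoc, ← pow_succ, hv]) u a
  refine Dvd.intro_left (u ^ (b + 1) * v ^ b) ?_
  rw [hfrob, ha]
  rw [ha] at hu hcollapse
  linear_combination v ^ b * (u + v) ^ a * hu + u ^ (b + 1) * hcollapse

lemma prod_add_pow_dvd {R : Type*} [CommRing R] [ExpChar R p] {u v : ℕ → R} {N e : ℕ → ℕ} {k : ℕ}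
    (he : ∀ j < k, p ^ e j ≤ N j)
    (hu : ∀ j < k, (∏ i ∈ Finset.range j, u i ^ N i) * u j ^ (N j + 1) = 0)
    (hv : ∀ j < k, (∏ i ∈ Finset.range j, v i ^ N i) * v j ^ (N j + 1) = 0) :
    ∏ j ∈ Finset.range k, (u j + v j) ^ (2 * p ^ e j - 1) ∣
      (∏ j ∈ Finset.range k, u j ^ N j) * ∏ j ∈ Finset.range k, v j ^ N j := by
  rw [← Finset.prod_mul_distrib]
  induction k with
  | zero => simp
  | succ k ih =>
    obtain ⟨he, hek⟩ := Nat.forall_lt_succ_right.1 he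
    obtain ⟨hu, huk⟩ := Nat.forall_lt_succ_right.1 hu
    obtain ⟨hv, hvk⟩ := Nat.forall_lt_succ_right.1 hv
    rw [Finset.prod_range_succ, Finset.prod_range_succ]
    refine (mul_dvd_mul_right (ih he hu hv) _).trans (mul_add_pow_dvd p hek ?_ ?_)
    · rw [Finset.prod_mul_distrib, mul_right_comm, huk, zero_mul]
    · rw [Finset.prod_mul_distrib, mul_assoc, hvk, mul_zero]

lemma tmul_ne_zero {R M M' : Type*} [CommRing R] [IsDomain R] [AddCommGroup M] [Module R M]
    [Module.IsTorsionFree R M] [AddCommGroup M'] [Module R M'] [Module.IsTorsionFree R M']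
    {a : M} {b : M'} (ha : a ≠ 0) (hb : b ≠ 0) : a ⊗ₜ[R] b ≠ 0 := by
  have ha' : LinearIndependent R fun _ : Unit => a := .of_subsingleton () ha
  have hb' : LinearIndependent R fun _ : Unit => b := .of_subsingleton () hb
  exact (ha'.tmul_of_isDomain hb').ne_zero ((), ())

theorem prod_tmul_one_add_one_tmul_pow_ne_zero {K S : Type*} [Field K] [ExpChar K p] [CommRing S]
    [Algebra K S] {x : ℕ → S} {N e : ℕ → ℕ} {k : ℕ} (he : ∀ j < k, p ^ e j ≤ N j)
    (hx : ∀ j < k, (∏ i ∈ Finset.range j, x i ^ N i) * x j ^ (N j + 1) = 0)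
    (htop : ∏ j ∈ Finset.range k, x j ^ N j ≠ 0) :
    ∏ j ∈ Finset.range k, (x j ⊗ₜ[K] (1 : S) + (1 : S) ⊗ₜ[K] x j) ^ (2 * p ^ e j - 1) ≠ 0 := by
  have : Nontrivial S := nontrivial_of_ne _ _ htop
  have : ExpChar (S ⊗[K] S) p :=
    expChar_of_injective_algebraMap (algebraMap K (S ⊗[K] S)).injective p
  let ι₁ : S →ₐ[K] S ⊗[K] S := Algebra.TensorProduct.includeLeft
  let ι₂ : S →ₐ[K] S ⊗[K] S := Algebra.TensorProduct.includeRight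
  have hdvd : ∏ j ∈ Finset.range k, (ι₁ (x j) + ι₂ (x j)) ^ (2 * p ^ e j - 1) ∣
      (∏ j ∈ Finset.range k, ι₁ (x j) ^ N j) * ∏ j ∈ Finset.range k, ι₂ (x j) ^ N j :=
    prod_add_pow_dvd p he (fun j hj => by simpa using congrArg ι₁ (hx j hj))
      (fun j hj => by simpa using congrArg ι₂ (hx j hj))
  have htmul : (∏ j ∈ Finset.range k, ι₁ (x j) ^ N j) * ∏ j ∈ Finset.range k, ι₂ (x j) ^ N j =
      (∏ j ∈ Finset.range k, x j ^ N j) ⊗ₜ (∏ j ∈ Finset.range k, x j ^ N j) := by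
    simp only [← map_pow, ← map_prod]
    simp only [ι₁, ι₂, Algebra.TensorProduct.includeLeft_apply,
      Algebra.TensorProduct.includeRight_apply, Algebra.TensorProduct.tmul_mul_tmul, mul_one,
      one_mul]
  exact ne_zero_of_dvd_ne_zero (htmul ▸ tmul_ne_zero htop htop) hdvd

end TensorSquare

theorem statement7_general (k m : ℕ) (e : ℕ → ℕ) (he : ∀ j < k, j + 2 ^ e j < m + k) :
    ∏ j : Fin k, zGen k m j ^ (2 ^ (e j + 1) - 1) ≠ 0 := by
  obtain ⟨S, _, _, x, hx, htop⟩ :=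
    FlagRelations.exists_algebra_prod_pow_ne_zero (ZMod 2) (fun j => m + k - 1 - j) k
  obtain ⟨φ, hφ⟩ := hx.exists_algHom_xGen
  have hne := prod_tmul_one_add_one_tmul_pow_ne_zero (K := ZMod 2) 2 (e := e)
    (fun j hj => by have := he j hj; omega)
    (fun _ => hx.prod_pow_mul_pow_succ_eq_zero) htop
  intro hzero
  refine hne ?_
  simpa [zGen, hφ, Finset.prod_range, pow_succ'] using
    congrArg (Algebra.TensorProduct.map φ φ) hzero

/-- for `k ≥ 1` and `e ≥ 0`, `(z_1 z_2 ⋯ z_k)^{2^{e+1}-1} ≠ 0` in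
`R(k, 2^e) ⊗ R(k, 2^e)`. -/
theorem statement7 (k e : ℕ) (hk : 1 ≤ k) :
    (∏ j : Fin k, zGen k (2 ^ e) j) ^ (2 ^ (e + 1) - 1) ≠ 0 := by
  rw [← Finset.prod_pow]
  exact statement7_general k (2 ^ e) (fun _ => e) fun j hj => by omega
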